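/- arXiv:1205.5424 — 2 statements merged into one kernel-verified Lean document; each statement's English description precedes it below -/
import Mathlib

section
/- (Expansion of the Tutte polynomial in the activities θ* and θ, realizable case.) For every vector configuration v : Fin n → V and all real numbers x, y: t(x, y) = ∑_{A ⊆ Fin n} (x-1)^{θ*(A)} (y-1)^{θ(A)}. -/
open Set Submodule

/-- The reorientation of the vector configuration `v` on the subset `A`:
vectors indexed by `A` are negated. -/
def reorient {n : ℕ} {V : Type*} [AddCommGroup V] (v : Fin n → V) (A : Finset (Fin n)) :
    Fin n → V :=
  fun i => if i ∈ A then -v i else v i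

/-- `a` is orientation-active for the configuration `w`: it is the smallest element of a
positive circuit, i.e. there is a nonnegative linear dependence with positive coefficient
at `a` and zero coefficients below `a`. -/
def OActive {n : ℕ} {V : Type*} [AddCommGroup V] [Module ℝ V]
    (w : Fin n → V) (a : Fin n) : Prop :=
  ∃ c : Fin n → ℝ, (∀ i, 0 ≤ c i) ∧ (∑ i, c i • w i) = 0 ∧ 0 < c a ∧ ∀ i < a, c i = 0

/-- `a` is dually orientation-active for the configuration `w`: it is the smallest element of
a positive cocircuit, i.e. there is a linear functional, nonnegative on the configuration,
positive at `w a` and vanishing on the vectors below `a`. -/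
def ODualActive {n : ℕ} {V : Type*} [AddCommGroup V] [Module ℝ V]
    (w : Fin n → V) (a : Fin n) : Prop :=
  ∃ f : V →ₗ[ℝ] ℝ, (∀ i, 0 ≤ f (w i)) ∧ 0 < f (w a) ∧ ∀ i < a, f (w i) = 0

/-- `θ*(A)`: the number of elements outside `A` that are dually orientation-active for `v_A`. -/
noncomputable def thetaStar {n : ℕ} {V : Type*} [AddCommGroup V] [Module ℝ V]
    (v : Fin n → V) (A : Finset (Fin n)) : ℕ :=
  {a : Fin n | a ∉ A ∧ ODualActive (reorient v A) a}.ncard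

/-- `θ̄*(A)`: the number of elements of `A` that are dually orientation-active for `v_A`. -/
noncomputable def thetaStarBar {n : ℕ} {V : Type*} [AddCommGroup V] [Module ℝ V]
    (v : Fin n → V) (A : Finset (Fin n)) : ℕ :=
  {a : Fin n | a ∈ A ∧ ODualActive (reorient v A) a}.ncard

/-- `θ(A)`: the number of elements outside `A` that are orientation-active for `v_A`. -/
noncomputable def theta {n : ℕ} {V : Type*} [AddCommGroup V] [Module ℝ V]
    (v : Fin n → V) (A : Finset (Fin n)) : ℕ :=
  {a : Fin n | a ∉ A ∧ OActive (reorient v A) a}.ncard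

/-- `θ̄(A)`: the number of elements of `A` that are orientation-active for `v_A`. -/
noncomputable def thetaBar {n : ℕ} {V : Type*} [AddCommGroup V] [Module ℝ V]
    (v : Fin n → V) (A : Finset (Fin n)) : ℕ :=
  {a : Fin n | a ∈ A ∧ OActive (reorient v A) a}.ncard

/-- The rank of a set of indices: the dimension of the span of the corresponding vectors. -/
noncomputable def vrank {n : ℕ} {V : Type*} [AddCommGroup V] [Module ℝ V]
    (v : Fin n → V) (S : Set (Fin n)) : ℕ :=
  Module.finrank ℝ ↥(span ℝ (v '' S))

/-- The Tutte polynomial of the matroid realized by the configuration `v`: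
`t(x,y) = ∑_{A ⊆ Fin n} (x-1)^(r(E) - r(A)) * (y-1)^(|A| - r(A))`. -/
noncomputable def tutteV {n : ℕ} {V : Type*} [AddCommGroup V] [Module ℝ V]
    (v : Fin n → V) (x y : ℝ) : ℝ :=
  ∑ A : Finset (Fin n),
    (x - 1) ^ (vrank v Set.univ - vrank v ↑A) * (y - 1) ^ (A.card - vrank v ↑A)

/-! Order the elements so that the last one, `u`, is removed first, and write `w` for the other
vectors. The dependencies and the covectors of the extended configuration form orthogonal subspaces
of `ℝⁿ × ℝ`, the second factor recording the coordinate at `u`. The activities of an earlier element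
for `(w, u)`, for `(w, -u)`, for the deletion `w` and for the contraction `w / u` ask for a
nonnegative vector of one of these subspaces whose last coordinate is `≥ 0`, `≤ 0`, zero or
arbitrary. Combining vectors whose last coordinates have opposite signs, and pairing dependencies
with covectors, shows that one of the two orientations of `u` has the activities of the deletion and
the other those of the contraction. Hence the activity sum obeys the deletion-contraction
recursion of the Tutte polynomial. -/

open scoped Pointwise

section LeadingPositive

variable {ι K : Type*} [LinearOrder ι] [CommRing K] [LinearOrder K]

/-- The vector `c` is nonnegative and `a` is the least element of its support. -/
def LeadsAt (c : ι → K) (a : ι) : Prop :=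
  (∀ i, 0 ≤ c i) ∧ 0 < c a ∧ ∀ i < a, c i = 0

variable [IsStrictOrderedRing K]

theorem LeadsAt.smul {c : ι → K} {a : ι} {r : K} (hr : 0 < r) (hc : LeadsAt c a) :
    LeadsAt (r • c) a :=
  ⟨fun i => mul_nonneg hr.le (hc.1 i), mul_pos hr hc.2.1, fun i hi => by simp [hc.2.2 i hi]⟩

theorem LeadsAt.add {c d : ι → K} {a b : ι} (hab : a ≤ b) (hc : LeadsAt c a) (hd : LeadsAt d b) :
    LeadsAt (c + d) a :=
  ⟨fun i => add_nonneg (hc.1 i) (hd.1 i), add_pos_of_pos_of_nonneg hc.2.1 (hd.1 a),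
    fun i hi => by simp [hc.2.2 i hi, hd.2.2 i (hi.trans_le hab)]⟩

end LeadingPositive

section ActiveIn

variable {ι K : Type*} [LinearOrder ι] [CommRing K] [LinearOrder K]
  {L M : Submodule K ((ι → K) × K)} {T : Set K} {a b : ι}

/-- `a` is the least element of the support of a nonnegative vector `c` such that `(c, t) ∈ L` for
some `t ∈ T`. Different choices of `T` give the activities in the minors and in the reorientations
at the element that carries the coordinate `t`. -/
def ActiveIn (L : Submodule K ((ι → K) × K)) (T : Set K) (a : ι) : Prop :=
  ∃ c t, (c, t) ∈ L ∧ t ∈ T ∧ LeadsAt c a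

/-- Restricting the extra coordinate from `T` to `0` loses no active element. -/
def Collapses (L : Submodule K ((ι → K) × K)) (T : Set K) : Prop :=
  ∀ a, ActiveIn L T a → ActiveIn L {0} a

theorem ActiveIn.mono {S : Set K} (hST : S ⊆ T) : ActiveIn L S a → ActiveIn L T a :=
  fun ⟨c, t, hL, ht, hc⟩ => ⟨c, t, hL, hST ht, hc⟩

theorem activeIn_univ_iff :
    ActiveIn L univ a ↔ ActiveIn L (Ici 0) a ∨ ActiveIn L (Iic 0) a := by
  refine ⟨?_, Or.rec (ActiveIn.mono (subset_univ _)) (ActiveIn.mono (subset_univ _))⟩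
  rintro ⟨c, t, hL, -, hc⟩
  exact (le_total 0 t).imp (fun ht => ⟨c, t, hL, ht, hc⟩) (fun ht => ⟨c, t, hL, ht, hc⟩)

theorem Collapses.activeIn_iff (h : Collapses L T) (hT : 0 ∈ T) :
    ActiveIn L T a ↔ ActiveIn L {0} a :=
  ⟨h a, ActiveIn.mono (singleton_subset_iff.2 hT)⟩

theorem Collapses.activeIn_Iic_iff_univ (h : Collapses L (Ici 0)) :
    ActiveIn L (Iic 0) a ↔ ActiveIn L univ a := by
  rw [activeIn_univ_iff]
  exact ⟨Or.inr, Or.rec (fun ha => (h a ha).mono (singleton_subset_iff.2 self_mem_Iic)) id⟩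

theorem Collapses.activeIn_Ici_iff_univ (h : Collapses L (Iic 0)) :
    ActiveIn L (Ici 0) a ↔ ActiveIn L univ a := by
  rw [activeIn_univ_iff]
  exact ⟨Or.inl, Or.rec id fun ha => (h a ha).mono (singleton_subset_iff.2 self_mem_Ici)⟩

theorem collapses_of_forall_mem (h : ∀ p ∈ L, (p.1, 0) ∈ L) : Collapses L T :=
  fun _ ⟨c, t, hL, _, hc⟩ => ⟨c, 0, h (c, t) hL, rfl, hc⟩

theorem collapses_or_collapses {S : Set K}
    (h : ∀ a b, ActiveIn L S a → ActiveIn M T b → ActiveIn L {0} a ∨ ActiveIn M {0} b) :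
    Collapses L S ∨ Collapses M T := by
  by_contra! hne
  simp only [Collapses, not_forall] at hne
  obtain ⟨⟨a, ha, hna⟩, b, hb, hnb⟩ := hne
  exact (h a b ha hb).elim hna hnb

variable [IsStrictOrderedRing K]

theorem ActiveIn.zero_or_zero (ha : ActiveIn L (Ici 0) a) (hb : ActiveIn L (Iic 0) b) :
    ActiveIn L {0} a ∨ ActiveIn L {0} b := by
  obtain ⟨c, t, hct, ht, hc⟩ := ha
  obtain ⟨d, s, hds, hs, hd⟩ := hb
  obtain rfl | ht : 0 = t ∨ 0 < t := (mem_Ici.1 ht).eq_or_lt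
  · exact .inl ⟨c, 0, hct, rfl, hc⟩
  obtain rfl | hs : s = 0 ∨ s < 0 := (mem_Iic.1 hs).eq_or_lt
  · exact .inr ⟨d, 0, hds, rfl, hd⟩
  have hmem : (-s • c + t • d, (0 : K)) ∈ L := by
    convert add_mem (L.smul_mem (-s) hct) (L.smul_mem t hds) using 1
    ext <;> simp [mul_comm]
  have hsc := hc.smul (neg_pos.2 hs)
  have htd := hd.smul ht
  rcases le_total a b with hab | hba
  · exact .inl ⟨_, 0, hmem, rfl, hsc.add hab htd⟩
  · exact .inr ⟨_, 0, hmem, rfl, add_comm (t • d) (-s • c) ▸ htd.add hba hsc⟩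

/-- Orthogonality for the standard bilinear form on `Kⁿ × K`. -/
def OrthogonalPair [Fintype ι] (L M : Submodule K ((ι → K) × K)) : Prop :=
  ∀ p ∈ L, ∀ q ∈ M, p.1 ⬝ᵥ q.1 + p.2 * q.2 = 0

theorem OrthogonalPair.zero_or_zero [Fintype ι] (h : OrthogonalPair L M)
    (hT : ∀ s ∈ T, ∀ t ∈ T, 0 ≤ s * t) (ha : ActiveIn L T a) (hb : ActiveIn M T b) :
    ActiveIn L {0} a ∨ ActiveIn M {0} b := by
  obtain ⟨c, t, hct, ht, hc⟩ := ha
  obtain ⟨d, s, hds, hs, hd⟩ := hb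
  have hts : t * s = 0 :=
    ((add_eq_zero_iff_of_nonneg (dotProduct_nonneg_of_nonneg hc.1 hd.1) (hT t ht s hs)).1
      (h _ hct _ hds)).2
  rcases mul_eq_zero.1 hts with rfl | rfl
  · exact .inl ⟨c, 0, hct, rfl, hc⟩
  · exact .inr ⟨d, 0, hds, rfl, hd⟩

theorem OrthogonalPair.collapses [Fintype ι] (h : OrthogonalPair L M) :
    Collapses L (Ici 0) ∧ Collapses M (Iic 0) ∨ Collapses L (Iic 0) ∧ Collapses M (Ici 0) := by
  have hL : Collapses L (Ici 0) ∨ Collapses L (Iic 0) :=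
    collapses_or_collapses fun _ _ => ActiveIn.zero_or_zero
  have hM : Collapses M (Ici 0) ∨ Collapses M (Iic 0) :=
    collapses_or_collapses fun _ _ => ActiveIn.zero_or_zero
  have hpos : Collapses L (Ici 0) ∨ Collapses M (Ici 0) :=
    collapses_or_collapses fun _ _ => h.zero_or_zero fun _ hs _ ht => mul_nonneg hs ht
  have hneg : Collapses L (Iic 0) ∨ Collapses M (Iic 0) :=
    collapses_or_collapses fun _ _ =>
      h.zero_or_zero fun _ hs _ ht => mul_nonneg_of_nonpos_of_nonpos hs ht
  tauto

end ActiveIn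

section ExtendedConfiguration

variable {ι K V : Type*} [CommRing K] [AddCommGroup V] [Module K V]

/-- The linear dependencies of the family `w` extended by the vector `u`. -/
def dependencySpace [Fintype ι] (w : ι → V) (u : V) : Submodule K ((ι → K) × K) :=
  LinearMap.ker ((Fintype.linearCombination K w).coprod (LinearMap.toSpanSingleton K V u))

/-- The vectors of values of the linear functionals on the family `w` extended by `u`. -/
def covectorSpace (w : ι → V) (u : V) : Submodule K ((ι → K) × K) :=
  LinearMap.range ((LinearMap.pi fun i => LinearMap.applyₗ (w i)).prod (LinearMap.applyₗ u) :
    (V →ₗ[K] K) →ₗ[K] (ι → K) × K)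

theorem mem_dependencySpace [Fintype ι] {w : ι → V} {u : V} {c : ι → K} {t : K} :
    (c, t) ∈ dependencySpace w u ↔ ∑ i, c i • w i + t • u = 0 := by
  simp [dependencySpace, Fintype.linearCombination_apply]

theorem mem_covectorSpace {w : ι → V} {u : V} {c : ι → K} {t : K} :
    (c, t) ∈ covectorSpace w u ↔ ∃ f : V →ₗ[K] K, (fun i => f (w i)) = c ∧ f u = t := by
  simp [covectorSpace, funext_iff]

theorem orthogonalPair_dependencySpace_covectorSpace [Fintype ι] (w : ι → V) (u : V) :
    OrthogonalPair (K := K) (dependencySpace w u) (covectorSpace w u) := by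
  rintro ⟨c, t⟩ hct ⟨d, s⟩ hds
  obtain ⟨f, rfl, rfl⟩ := mem_covectorSpace.1 hds
  simpa [dotProduct] using congrArg f (mem_dependencySpace.1 hct)

variable [LinearOrder ι] [LinearOrder K] {w : ι → V} {u : V} {T : Set K} {a : ι}

theorem activeIn_covectorSpace_iff :
    ActiveIn (covectorSpace w u) T a ↔
      ∃ f : V →ₗ[K] K, f u ∈ T ∧ LeadsAt (fun i => f (w i)) a := by
  simp only [ActiveIn, mem_covectorSpace]
  constructor
  · rintro ⟨_, _, ⟨f, rfl, rfl⟩, hT, hf⟩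
    exact ⟨f, hT, hf⟩
  · rintro ⟨f, hT, hf⟩
    exact ⟨_, _, ⟨f, rfl, rfl⟩, hT, hf⟩

theorem activeIn_dependencySpace_neg [Fintype ι] :
    ActiveIn (dependencySpace w (-u)) T a ↔ ActiveIn (dependencySpace w u) (-T) a := by
  simp only [ActiveIn, mem_dependencySpace]
  refine exists_congr fun c => (Equiv.neg K).exists_congr fun t => ?_
  simp

theorem activeIn_covectorSpace_neg :
    ActiveIn (covectorSpace w (-u)) T a ↔ ActiveIn (covectorSpace w u) (-T) a := by
  simp [activeIn_covectorSpace_iff]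

end ExtendedConfiguration

section Agreement

variable {n : ℕ} {V W : Type*} [AddCommGroup V] [Module ℝ V] [AddCommGroup W] [Module ℝ W]

/-- The contraction of `w` by `u`: the images of the vectors `w` in the quotient by `u`. -/
def contract (w : Fin n → V) (u : V) : Fin n → V ⧸ span ℝ {u} :=
  fun i => (span ℝ {u}).mkQ (w i)

/-- The elements other than the last one have the same activities in `v` as in `w`. -/
def ActivitiesAgree (v : Fin (n + 1) → V) (w : Fin n → W) : Prop :=
  ∀ a, (OActive v a.castSucc ↔ OActive w a) ∧ (ODualActive v a.castSucc ↔ ODualActive w a)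

variable {w : Fin n → V} {u : V} {a : Fin n}

theorem oActive_iff_leadsAt :
    OActive w a ↔ ∃ c : Fin n → ℝ, LeadsAt c a ∧ ∑ i, c i • w i = 0 := by
  simp only [OActive, LeadsAt]
  exact exists_congr fun c => by tauto

theorem leadsAt_castSucc_iff {c : Fin (n + 1) → ℝ} :
    LeadsAt c a.castSucc ↔ LeadsAt (Fin.init c) a ∧ 0 ≤ c (Fin.last n) := by
  simp only [LeadsAt, Fin.forall_fin_succ', Fin.init, Fin.castSucc_lt_castSucc_iff,
    not_lt_of_gt (Fin.castSucc_lt_last a), false_implies, and_true]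
  tauto

theorem oActive_snoc_castSucc_iff :
    OActive (Fin.snoc w u : Fin (n + 1) → V) a.castSucc ↔
      ActiveIn (dependencySpace w u) (Ici (0 : ℝ)) a := by
  simp only [oActive_iff_leadsAt, ActiveIn, mem_dependencySpace, leadsAt_castSucc_iff,
    Fin.sum_univ_castSucc, Fin.snoc_castSucc, Fin.snoc_last, mem_Ici]
  constructor
  · rintro ⟨c, ⟨hc, hlast⟩, hsum⟩
    exact ⟨Fin.init c, c (Fin.last n), hsum, hlast, hc⟩
  · rintro ⟨c, t, hsum, ht, hc⟩
    exact ⟨Fin.snoc c t, by simpa using ⟨hc, ht⟩, by simpa using hsum⟩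

theorem oActive_iff_activeIn (u : V) :
    OActive w a ↔ ActiveIn (dependencySpace w u) {(0 : ℝ)} a := by
  simp [oActive_iff_leadsAt, ActiveIn, mem_dependencySpace, and_comm]

theorem oActive_contract_iff :
    OActive (contract w u) a ↔ ActiveIn (dependencySpace w u) (univ : Set ℝ) a := by
  simp only [oActive_iff_leadsAt, ActiveIn, mem_dependencySpace, mem_univ, true_and]
  refine exists_congr fun c => ?_
  have hsum : ∑ i, c i • contract w u i = (span ℝ {u}).mkQ (∑ i, c i • w i) := by
    simp [contract]
  have hneg : (∃ t : ℝ, t • u = ∑ i, c i • w i) ↔ ∃ t : ℝ, ∑ i, c i • w i + t • u = 0 :=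
    (Equiv.neg ℝ).exists_congr fun t => by
      rw [Equiv.neg_apply, neg_smul, ← sub_eq_add_neg, sub_eq_zero, eq_comm]
  rw [hsum, mkQ_apply, Quotient.mk_eq_zero, mem_span_singleton, hneg, exists_and_right, and_comm]

theorem oDualActive_snoc_castSucc_iff :
    ODualActive (Fin.snoc w u : Fin (n + 1) → V) a.castSucc ↔
      ActiveIn (covectorSpace w u) (Ici (0 : ℝ)) a := by
  rw [activeIn_covectorSpace_iff]
  refine exists_congr fun f => ?_
  change LeadsAt (fun i => f ((Fin.snoc w u : Fin (n + 1) → V) i)) a.castSucc ↔ _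
  simp [leadsAt_castSucc_iff, Fin.init_def, and_comm]

theorem oDualActive_iff_activeIn (u : V) :
    ODualActive w a ↔ ActiveIn (covectorSpace w u) (univ : Set ℝ) a := by
  simp [activeIn_covectorSpace_iff, ODualActive, LeadsAt]

theorem oDualActive_contract_iff :
    ODualActive (contract w u) a ↔ ActiveIn (covectorSpace w u) {(0 : ℝ)} a := by
  rw [activeIn_covectorSpace_iff]
  constructor
  · rintro ⟨f, hf⟩
    refine ⟨f ∘ₗ (span ℝ {u}).mkQ, ?_, hf⟩
    simp [(Quotient.mk_eq_zero _).2 (mem_span_singleton_self u)]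
  · rintro ⟨f, hfu, hf⟩
    have hker : span ℝ {u} ≤ LinearMap.ker f := (span_singleton_le_iff_mem _ _).2 hfu
    exact ⟨(span ℝ {u}).liftQ f hker, hf⟩

theorem activitiesAgree_snoc_deletion (hL : Collapses (dependencySpace w u) (Ici (0 : ℝ)))
    (hM : Collapses (covectorSpace w u) (Iic (0 : ℝ))) :
    ActivitiesAgree (Fin.snoc w u : Fin (n + 1) → V) w := fun _ => by
  rw [oActive_snoc_castSucc_iff, oDualActive_snoc_castSucc_iff, oActive_iff_activeIn u,
    oDualActive_iff_activeIn u]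
  exact ⟨hL.activeIn_iff self_mem_Ici, hM.activeIn_Ici_iff_univ⟩

theorem activitiesAgree_snoc_contraction (hL : Collapses (dependencySpace w u) (Iic (0 : ℝ)))
    (hM : Collapses (covectorSpace w u) (Ici (0 : ℝ))) :
    ActivitiesAgree (Fin.snoc w u : Fin (n + 1) → V) (contract w u) := fun _ => by
  rw [oActive_snoc_castSucc_iff, oDualActive_snoc_castSucc_iff, oActive_contract_iff,
    oDualActive_contract_iff]
  exact ⟨hL.activeIn_Ici_iff_univ, hM.activeIn_iff self_mem_Ici⟩

theorem activitiesAgree_snoc_neg_deletion (hL : Collapses (dependencySpace w u) (Iic (0 : ℝ)))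
    (hM : Collapses (covectorSpace w u) (Ici (0 : ℝ))) :
    ActivitiesAgree (Fin.snoc w (-u) : Fin (n + 1) → V) w := fun _ => by
  rw [oActive_snoc_castSucc_iff, oDualActive_snoc_castSucc_iff, activeIn_dependencySpace_neg,
    activeIn_covectorSpace_neg, neg_Ici, neg_zero, oActive_iff_activeIn u,
    oDualActive_iff_activeIn u]
  exact ⟨hL.activeIn_iff self_mem_Iic, hM.activeIn_Iic_iff_univ⟩

theorem activitiesAgree_snoc_neg_contraction (hL : Collapses (dependencySpace w u) (Ici (0 : ℝ)))
    (hM : Collapses (covectorSpace w u) (Iic (0 : ℝ))) :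
    ActivitiesAgree (Fin.snoc w (-u) : Fin (n + 1) → V) (contract w u) := fun _ => by
  rw [oActive_snoc_castSucc_iff, oDualActive_snoc_castSucc_iff, activeIn_dependencySpace_neg,
    activeIn_covectorSpace_neg, neg_Ici, neg_zero, oActive_contract_iff, oDualActive_contract_iff]
  exact ⟨hL.activeIn_Iic_iff_univ, hM.activeIn_iff self_mem_Iic⟩

theorem activitiesAgree_deletion_contraction (w : Fin n → V) (u : V) :
    ActivitiesAgree (Fin.snoc w u : Fin (n + 1) → V) w ∧
        ActivitiesAgree (Fin.snoc w (-u) : Fin (n + 1) → V) (contract w u) ∨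
      ActivitiesAgree (Fin.snoc w u : Fin (n + 1) → V) (contract w u) ∧
        ActivitiesAgree (Fin.snoc w (-u) : Fin (n + 1) → V) w := by
  rcases (orthogonalPair_dependencySpace_covectorSpace (K := ℝ) w u).collapses with
    ⟨hL, hM⟩ | ⟨hL, hM⟩
  · exact .inl ⟨activitiesAgree_snoc_deletion hL hM, activitiesAgree_snoc_neg_contraction hL hM⟩
  · exact .inr ⟨activitiesAgree_snoc_contraction hL hM, activitiesAgree_snoc_neg_deletion hL hM⟩

theorem activitiesAgree_snoc_zero (w : Fin n → V) :
    ActivitiesAgree (Fin.snoc w 0 : Fin (n + 1) → V) w := by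
  refine activitiesAgree_snoc_deletion (collapses_of_forall_mem ?_) (collapses_of_forall_mem ?_)
  · rintro ⟨c, t⟩ hct
    simpa [mem_dependencySpace] using hct
  · rintro ⟨c, t⟩ hct
    obtain ⟨f, rfl, rfl⟩ := mem_covectorSpace.1 hct
    exact mem_covectorSpace.2 ⟨f, rfl, map_zero f⟩

theorem activitiesAgree_snoc_of_notMem_span (hu : u ∉ span ℝ (range w)) :
    ActivitiesAgree (Fin.snoc w u : Fin (n + 1) → V) w := by
  refine activitiesAgree_snoc_deletion (collapses_of_forall_mem ?_) (collapses_of_forall_mem ?_)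
  · rintro ⟨c, t⟩ hct
    have hsum : ∑ i, c i • w i + t • u = 0 := mem_dependencySpace.1 hct
    have hmem : t • u ∈ span ℝ (range w) := by
      rw [eq_neg_of_add_eq_zero_right hsum]
      exact neg_mem (sum_mem fun i _ => smul_mem _ _ (subset_span (mem_range_self i)))
    obtain rfl : t = 0 := by_contra fun ht => hu ((smul_mem_iff _ ht).1 hmem)
    exact hct
  · rintro ⟨c, t⟩ hct
    obtain ⟨f, rfl, rfl⟩ := mem_covectorSpace.1 hct
    obtain ⟨g, hgu, hg⟩ := exists_le_ker_of_notMem hu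
    have hgw (i : Fin n) : g (w i) = 0 := hg (subset_span (mem_range_self i))
    exact mem_covectorSpace.2 ⟨f - (f u / g u) • g, by simp [hgw], by simp [hgu]⟩

theorem oActive_last_iff {v : Fin (n + 1) → V} :
    OActive v (Fin.last n) ↔ v (Fin.last n) = 0 := by
  constructor
  · rintro ⟨c, -, hsum, hpos, hzero⟩
    have hinit : ∑ i : Fin n, c i.castSucc • v i.castSucc = 0 :=
      Finset.sum_eq_zero fun i _ => by rw [hzero _ (Fin.castSucc_lt_last i), zero_smul]
    rw [Fin.sum_univ_castSucc, hinit, zero_add] at hsum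
    exact (smul_eq_zero.1 hsum).resolve_left hpos.ne'
  · intro hv
    refine ⟨Pi.single (Fin.last n) 1, ?_, ?_, by simp, fun i hi => by simp [hi.ne]⟩
    · exact fun i => (Pi.single_nonneg.2 zero_le_one : (0 : Fin (n + 1) → ℝ) ≤ _) i
    · simp [hv]

theorem oDualActive_last_iff {v : Fin (n + 1) → V} :
    ODualActive v (Fin.last n) ↔ v (Fin.last n) ∉ span ℝ (range (Fin.init v)) := by
  constructor
  · rintro ⟨f, -, hpos, hzero⟩ hmem
    have hker : span ℝ (range (Fin.init v)) ≤ LinearMap.ker f :=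
      span_le.2 (range_subset_iff.2 fun i => hzero _ (Fin.castSucc_lt_last i))
    exact hpos.ne' (hker hmem)
  · intro hv
    obtain ⟨g, hgv, hg⟩ := exists_le_ker_of_notMem hv
    have hgw (i : Fin n) : g (v i.castSucc) = 0 := hg (subset_span (mem_range_self i))
    refine ⟨(g (v (Fin.last n)))⁻¹ • g, ?_, ?_, ?_⟩
    · simp [Fin.forall_fin_succ', hgw, hgv]
    · simp [hgv]
    · simp [Fin.forall_fin_succ', hgw]

end Agreement

section Reorientation

variable {n : ℕ} {V : Type*} [AddCommGroup V]

theorem reorient_snoc_map (w : Fin n → V) (u : V) (B : Finset (Fin n)) :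
    reorient (Fin.snoc w u : Fin (n + 1) → V) (B.map Fin.castSuccEmb) =
      Fin.snoc (reorient w B) u := by
  ext i
  induction i using Fin.lastCases <;> simp [reorient]

theorem reorient_snoc_insert (w : Fin n → V) (u : V) (B : Finset (Fin n)) :
    reorient (Fin.snoc w u : Fin (n + 1) → V) (insert (Fin.last n) (B.map Fin.castSuccEmb)) =
      Fin.snoc (reorient w B) (-u) := by
  ext i
  induction i using Fin.lastCases <;> simp [reorient]

variable [Module ℝ V]

theorem reorient_contract (w : Fin n → V) (u : V) (B : Finset (Fin n)) :
    reorient (contract w u) B = contract (reorient w B) u := by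
  ext i
  by_cases hi : i ∈ B <;> simp [reorient, contract, hi]

theorem span_range_reorient (w : Fin n → V) (B : Finset (Fin n)) :
    span ℝ (range (reorient w B)) = span ℝ (range w) := by
  refine le_antisymm (span_le.2 ?_) (span_le.2 ?_) <;> rintro _ ⟨i, rfl⟩
  · have hi : w i ∈ span ℝ (range w) := subset_span (mem_range_self i)
    by_cases hB : i ∈ B <;> simp [reorient, hB, hi]
  · have hi : reorient w B i ∈ span ℝ (range (reorient w B)) := subset_span (mem_range_self i)
    by_cases hB : i ∈ B <;> simpa [reorient, hB] using hi

theorem ncard_setOf_fin_succ (P : Fin (n + 1) → Prop) [Decidable (P (Fin.last n))] :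
    {a | P a}.ncard = {a : Fin n | P a.castSucc}.ncard + if P (Fin.last n) then 1 else 0 := by
  classical
  simp only [Set.ncard_eq_toFinset_card', Set.toFinset_ofPred, Finset.card_filter,
    Fin.sum_univ_castSucc]
  congr

variable {W : Type*} [AddCommGroup W] [Module ℝ W] {w : Fin n → V} {u : V} {w' : Fin n → W}
  {B : Finset (Fin n)}

open Classical in
theorem theta_snoc_map
    (h : ActivitiesAgree (Fin.snoc (reorient w B) u : Fin (n + 1) → V) (reorient w' B)) :
    theta (Fin.snoc w u : Fin (n + 1) → V) (B.map Fin.castSuccEmb) =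
      theta w' B + if u = 0 then 1 else 0 := by
  simp [theta, ncard_setOf_fin_succ, reorient_snoc_map, oActive_last_iff, fun a => (h a).1]

theorem theta_snoc_insert
    (h : ActivitiesAgree (Fin.snoc (reorient w B) (-u) : Fin (n + 1) → V) (reorient w' B)) :
    theta (Fin.snoc w u : Fin (n + 1) → V) (insert (Fin.last n) (B.map Fin.castSuccEmb)) =
      theta w' B := by
  classical
  simp [theta, ncard_setOf_fin_succ, reorient_snoc_insert, fun a => (h a).1]

open Classical in
theorem thetaStar_snoc_map
    (h : ActivitiesAgree (Fin.snoc (reorient w B) u : Fin (n + 1) → V) (reorient w' B)) :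
    thetaStar (Fin.snoc w u : Fin (n + 1) → V) (B.map Fin.castSuccEmb) =
      thetaStar w' B + if u ∉ span ℝ (range w) then 1 else 0 := by
  simp [thetaStar, ncard_setOf_fin_succ, reorient_snoc_map, oDualActive_last_iff,
    span_range_reorient, fun a => (h a).2]

theorem thetaStar_snoc_insert
    (h : ActivitiesAgree (Fin.snoc (reorient w B) (-u) : Fin (n + 1) → V) (reorient w' B)) :
    thetaStar (Fin.snoc w u : Fin (n + 1) → V) (insert (Fin.last n) (B.map Fin.castSuccEmb)) =
      thetaStar w' B := by
  classical
  simp [thetaStar, ncard_setOf_fin_succ, reorient_snoc_insert, fun a => (h a).2]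

end Reorientation

section Rank

theorem finrank_map_add_finrank_ker {K V W : Type*} [DivisionRing K] [AddCommGroup V] [Module K V]
    [AddCommGroup W] [Module K W] (f : V →ₗ[K] W) {S : Submodule K V} [FiniteDimensional K S]
    (hf : LinearMap.ker f ≤ S) :
    Module.finrank K (S.map f) + Module.finrank K (LinearMap.ker f) = Module.finrank K S := by
  rw [← (f.domRestrict S).finrank_range_add_finrank_ker, LinearMap.range_domRestrict,
    LinearMap.ker_domRestrict, (comapSubtypeEquivOfLe hf).finrank_eq]

theorem finrank_sup_span_singleton_of_notMem {K V : Type*} [DivisionRing K] [AddCommGroup V]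
    [Module K V] {S : Submodule K V} [FiniteDimensional K S] {u : V} (hu : u ∉ S) :
    Module.finrank K ↥(S ⊔ span K {u}) = Module.finrank K S + 1 := by
  have hu0 : u ≠ 0 := fun h => hu (h ▸ zero_mem S)
  rw [← finrank_span_singleton (K := K) hu0, ← finrank_sup_add_finrank_inf_eq S (span K {u}),
    (disjoint_span_singleton_of_notMem hu).eq_bot, finrank_bot, add_zero]

instance finiteDimensional_span_image {ι K V : Type*} [Finite ι] [DivisionRing K] [AddCommGroup V]
    [Module K V] (w : ι → V) (S : Set ι) : FiniteDimensional K (span K (w '' S)) :=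
  FiniteDimensional.span_of_finite K (S.toFinite.image w)

variable {n : ℕ} {V : Type*} [AddCommGroup V] [Module ℝ V] {u : V}

theorem vrank_mono (w : Fin n → V) {S T : Set (Fin n)} (hST : S ⊆ T) : vrank w S ≤ vrank w T :=
  Submodule.finrank_mono (span_mono (image_mono hST))

theorem vrank_le_card (w : Fin n → V) (B : Finset (Fin n)) : vrank w B ≤ B.card := by
  classical
  rw [vrank, ← Finset.coe_image]
  exact (finrank_span_finset_le_card _).trans Finset.card_image_le

theorem image_snoc_map {α : Type*} (w : Fin n → α) (u : α) (B : Finset (Fin n)) :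
    (Fin.snoc w u : Fin (n + 1) → α) '' ↑(B.map Fin.castSuccEmb) = w '' ↑B := by
  simp [image_image]

theorem image_snoc_insert {α : Type*} (w : Fin n → α) (u : α) (B : Finset (Fin n)) :
    (Fin.snoc w u : Fin (n + 1) → α) '' ↑(insert (Fin.last n) (B.map Fin.castSuccEmb)) =
      insert u (w '' ↑B) := by
  simp [image_insert_eq, image_image]

theorem vrank_snoc_map (w : Fin n → V) (u : V) (B : Finset (Fin n)) :
    vrank (Fin.snoc w u : Fin (n + 1) → V) (B.map Fin.castSuccEmb) = vrank w B := by
  rw [vrank, image_snoc_map, vrank]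

theorem vrank_snoc_insert (w : Fin n → V) (u : V) (B : Finset (Fin n)) :
    vrank (Fin.snoc w u : Fin (n + 1) → V) ↑(insert (Fin.last n) (B.map Fin.castSuccEmb)) =
      Module.finrank ℝ ↥(span ℝ (w '' B) ⊔ span ℝ {u}) := by
  rw [vrank, image_snoc_insert, span_insert, sup_comm]

theorem vrank_snoc_insert_zero (w : Fin n → V) (B : Finset (Fin n)) :
    vrank (Fin.snoc w 0 : Fin (n + 1) → V) ↑(insert (Fin.last n) (B.map Fin.castSuccEmb)) =
      vrank w B := by
  rw [vrank_snoc_insert, span_zero_singleton, sup_bot_eq, vrank]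

theorem vrank_snoc_insert_of_notMem_span (w : Fin n → V) (hu : u ∉ span ℝ (range w))
    (B : Finset (Fin n)) :
    vrank (Fin.snoc w u : Fin (n + 1) → V) ↑(insert (Fin.last n) (B.map Fin.castSuccEmb)) =
      vrank w B + 1 := by
  rw [vrank_snoc_insert, finrank_sup_span_singleton_of_notMem, vrank]
  exact fun h => hu (span_mono (image_subset_range _ _) h)

theorem vrank_snoc_insert_eq_contract (w : Fin n → V) (hu : u ≠ 0) (B : Finset (Fin n)) :
    vrank (Fin.snoc w u : Fin (n + 1) → V) ↑(insert (Fin.last n) (B.map Fin.castSuccEmb)) =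
      vrank (contract w u) B + 1 := by
  have hmap : (span ℝ (w '' B) ⊔ span ℝ {u}).map (span ℝ {u}).mkQ =
      span ℝ (contract w u '' B) := by
    rw [Submodule.map_sup, mkQ_map_self, sup_bot_eq, Submodule.map_span, image_image]
    rfl
  rw [vrank_snoc_insert, vrank, ← hmap, ← finrank_span_singleton (K := ℝ) hu,
    ← finrank_map_add_finrank_ker (span ℝ {u}).mkQ (by rw [ker_mkQ]; exact le_sup_right), ker_mkQ]

theorem vrank_snoc_univ (w : Fin n → V) (u : V) :
    vrank (Fin.snoc w u : Fin (n + 1) → V) univ =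
      vrank (Fin.snoc w u : Fin (n + 1) → V)
        ↑(insert (Fin.last n) (Finset.univ.map Fin.castSuccEmb)) := by
  congr 1
  ext i
  induction i using Fin.lastCases <;> simp

theorem vrank_snoc_univ_of_mem_span {w : Fin n → V} (hu : u ∈ span ℝ (range w)) :
    vrank (Fin.snoc w u : Fin (n + 1) → V) univ = vrank w univ := by
  rw [vrank, vrank, image_univ, image_univ, Fin.range_snoc, span_insert_eq_span hu]

end Rank

section DeletionContraction

theorem powerset_map {α β : Type*} (f : α ↪ β) (s : Finset α) :
    (s.map f).powerset = s.powerset.map (Finset.mapEmbedding f).toEmbedding := by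
  ext t
  simp [Finset.subset_map_iff, Finset.mapEmbedding_apply, eq_comm]

theorem sum_finset_fin_succ {n : ℕ} {M : Type*} [AddCommMonoid M]
    (F : Finset (Fin (n + 1)) → M) :
    ∑ A, F A = ∑ B : Finset (Fin n), F (B.map Fin.castSuccEmb) +
      ∑ B : Finset (Fin n), F (insert (Fin.last n) (B.map Fin.castSuccEmb)) := by
  rw [← Finset.powerset_univ, Fin.univ_castSuccEmb, Finset.cons_eq_insert,
    Finset.sum_powerset_insert (by simp), powerset_map, Finset.sum_map, Finset.sum_map,
    Finset.powerset_univ]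
  simp [Finset.mapEmbedding_apply]

variable {n : ℕ} {V R : Type*} [AddCommGroup V] [Module ℝ V] [CommSemiring R]

/-- The corank-nullity generating function of the configuration `v`: the Tutte polynomial
evaluated at `(a + 1, b + 1)`. -/
noncomputable def corankNullitySum (v : Fin n → V) (a b : R) : R :=
  ∑ A : Finset (Fin n), a ^ (vrank v univ - vrank v A) * b ^ (A.card - vrank v A)

/-- The generating function of the activities `θ*` and `θ` over all reorientations of `v`. -/
noncomputable def activitySum (v : Fin n → V) (a b : R) : R :=
  ∑ A : Finset (Fin n), a ^ thetaStar v A * b ^ theta v A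

variable {u : V}

theorem corankNullitySum_snoc_zero (w : Fin n → V) (a b : R) :
    corankNullitySum (Fin.snoc w 0 : Fin (n + 1) → V) a b = corankNullitySum w a b * (b + 1) := by
  have hsub (B : Finset (Fin n)) : B.card + 1 - vrank w B = B.card - vrank w B + 1 :=
    Nat.sub_add_comm (vrank_le_card w B)
  simp only [corankNullitySum, sum_finset_fin_succ, vrank_snoc_univ_of_mem_span (zero_mem _),
    vrank_snoc_map, vrank_snoc_insert_zero]
  simp [hsub, pow_succ, ← mul_assoc, ← Finset.sum_mul, mul_add, add_comm (_ * b)]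

theorem corankNullitySum_snoc_of_notMem_span {w : Fin n → V} (hu : u ∉ span ℝ (range w))
    (a b : R) :
    corankNullitySum (Fin.snoc w u : Fin (n + 1) → V) a b = corankNullitySum w a b * (a + 1) := by
  have hsub (B : Finset (Fin n)) :
      vrank w univ + 1 - vrank w B = vrank w univ - vrank w B + 1 :=
    Nat.sub_add_comm (vrank_mono w (subset_univ _))
  simp only [corankNullitySum, sum_finset_fin_succ, vrank_snoc_univ, vrank_snoc_map,
    vrank_snoc_insert_of_notMem_span w hu]
  simp [hsub, pow_succ, mul_right_comm _ a, ← Finset.sum_mul, mul_add]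

theorem corankNullitySum_snoc {w : Fin n → V} (hu0 : u ≠ 0) (hu : u ∈ span ℝ (range w))
    (a b : R) :
    corankNullitySum (Fin.snoc w u : Fin (n + 1) → V) a b =
      corankNullitySum w a b + corankNullitySum (contract w u) a b := by
  have hrank : vrank w univ = vrank (contract w u) univ + 1 := by
    rw [← vrank_snoc_univ_of_mem_span hu, vrank_snoc_univ, vrank_snoc_insert_eq_contract w hu0,
      Finset.coe_univ]
  simp only [corankNullitySum, sum_finset_fin_succ, vrank_snoc_univ_of_mem_span hu, vrank_snoc_map,
    vrank_snoc_insert_eq_contract w hu0]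
  simp [hrank]

theorem activitySum_snoc_zero (w : Fin n → V) (a b : R) :
    activitySum (Fin.snoc w 0 : Fin (n + 1) → V) a b = activitySum w a b * (b + 1) := by
  have hagree (B : Finset (Fin n)) := activitiesAgree_snoc_zero (reorient w B)
  have hagree_neg (B : Finset (Fin n)) :
      ActivitiesAgree (Fin.snoc (reorient w B) (-0) : Fin (n + 1) → V) (reorient w B) := by
    rw [neg_zero]
    exact hagree B
  simp only [activitySum, sum_finset_fin_succ, theta_snoc_map (hagree _),
    thetaStar_snoc_map (hagree _), theta_snoc_insert (hagree_neg _),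
    thetaStar_snoc_insert (hagree_neg _)]
  simp [pow_succ, ← mul_assoc, ← Finset.sum_mul, mul_add]

theorem activitySum_snoc_of_notMem_span {w : Fin n → V} (hu : u ∉ span ℝ (range w)) (a b : R) :
    activitySum (Fin.snoc w u : Fin (n + 1) → V) a b = activitySum w a b * (a + 1) := by
  have hu0 : u ≠ 0 := fun h => hu (h ▸ zero_mem _)
  have hagree {x : V} (hx : x ∉ span ℝ (range w)) (B : Finset (Fin n)) :
      ActivitiesAgree (Fin.snoc (reorient w B) x : Fin (n + 1) → V) (reorient w B) :=
    activitiesAgree_snoc_of_notMem_span (by rwa [span_range_reorient])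
  have hpos := hagree hu
  have hneg := hagree (mt neg_mem_iff.1 hu)
  simp only [activitySum, sum_finset_fin_succ, theta_snoc_map (hpos _),
    thetaStar_snoc_map (hpos _), theta_snoc_insert (hneg _), thetaStar_snoc_insert (hneg _)]
  simp [hu0, hu, pow_succ, mul_right_comm _ a, ← Finset.sum_mul, mul_add]

theorem activitySum_snoc {w : Fin n → V} (hu0 : u ≠ 0) (hu : u ∈ span ℝ (range w)) (a b : R) :
    activitySum (Fin.snoc w u : Fin (n + 1) → V) a b =
      activitySum w a b + activitySum (contract w u) a b := by
  simp only [activitySum, sum_finset_fin_succ, ← Finset.sum_add_distrib]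
  refine Finset.sum_congr rfl fun B _ => ?_
  have hdich := activitiesAgree_deletion_contraction (reorient w B) u
  rw [← reorient_contract] at hdich
  obtain ⟨hpos, hneg⟩ | ⟨hpos, hneg⟩ := hdich <;>
    rw [theta_snoc_map hpos, thetaStar_snoc_map hpos, theta_snoc_insert hneg,
      thetaStar_snoc_insert hneg] <;>
    simp [hu0, hu, add_comm]

end DeletionContraction

theorem statement10_general {n : ℕ} {V R : Type*} [AddCommGroup V] [Module ℝ V] [CommSemiring R]
    (v : Fin n → V) (a b : R) :
    corankNullitySum v a b = activitySum v a b := by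
  induction n generalizing V with
  | zero => simp [corankNullitySum, activitySum, thetaStar, theta, Set.eq_empty_of_isEmpty,
      Finset.eq_empty_of_isEmpty]
  | succ n ih =>
    obtain ⟨w, u, rfl⟩ : ∃ w u, v = Fin.snoc w u := ⟨_, _, (Fin.snoc_init_self v).symm⟩
    obtain rfl | hu0 := eq_or_ne u 0
    · rw [corankNullitySum_snoc_zero, activitySum_snoc_zero, ih w]
    by_cases hu : u ∈ span ℝ (range w)
    · rw [corankNullitySum_snoc hu0 hu, activitySum_snoc hu0 hu, ih w, ih (contract w u)]
    · rw [corankNullitySum_snoc_of_notMem_span hu, activitySum_snoc_of_notMem_span hu, ih w]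

/-- expansion of the Tutte polynomial in the activities `θ*` and `θ`:
`t(x, y) = ∑_{A ⊆ Fin n} (x-1)^θ*(A) (y-1)^θ(A)`. -/
theorem statement10 {n : ℕ} {V : Type*} [AddCommGroup V] [Module ℝ V] [FiniteDimensional ℝ V]
    (v : Fin n → V) (x y : ℝ) :
    tutteV v x y =
      ∑ A : Finset (Fin n), (x - 1) ^ thetaStar v A * (y - 1) ^ theta v A := by
  exact statement10_general v (x - 1) (y - 1)
end

section
/- (Counting bases by vanishing activities, realizable case.) For every vector configuration v : Fin n → V, the number of subsets A ⊆ Fin n with θ*(A) = θ(A) = 0 equals the number of bases of the underlying matroid, i.e. the number of subsets B ⊆ Fin n such that the family (v i)_{i ∈ B} is linearly independent and span {v i : i ∈ B} = span {v i : i ∈ Fin n}. -/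
open Set Submodule

/-!
Linear dependences and covectors of `v`, both regarded as vectors indexed by `Fin n`, form
orthogonal subspaces. Active elements outside `A` are witnessed by vectors satisfying sign
conditions, while `A` fails to be a basis because of a nonzero dependence supported in `A` or a
nonzero covector supported in `Aᶜ`. Sign conditions are turned into support conditions one element
`e` at a time, from the largest to the smallest. Each step preserves the number of sets without a
witness in every pair `{A, insert e A}`: a dependence and a covector whose products outside `e` are
nonnegative cannot have nonzero coordinates of the same sign at `e`, so one of two such witnesses
vanishes there.
-/

/-- The sign conditions imposed on a vector `c`: on `s`, the coordinate `c i` is nonpositive or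
nonnegative according to whether `i ∈ A`; on `t` it vanishes; elsewhere it is free. -/
structure Conforms {ι K : Type*} [Zero K] [LE K] (s t A : Set ι) (c : ι → K) : Prop where
  nonneg : ∀ i ∈ s, i ∉ A → 0 ≤ c i
  nonpos : ∀ i ∈ s, i ∈ A → c i ≤ 0
  eq_zero : ∀ i ∈ t, c i = 0

section Leading

variable {ι K : Type*} [LinearOrder ι]

lemma eq_zero_of_lt_of_isLeast_support [Zero K] {c : ι → K} {a i : ι}
    (hc : IsLeast (Function.support c) a) (hi : i < a) : c i = 0 :=
  not_not.1 fun h => (hc.2 h).not_gt hi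

lemma isLeast_support_of_ne_zero [Zero K] {c : ι → K} {a : ι} (ha : c a ≠ 0)
    (hlt : ∀ i < a, c i = 0) : IsLeast (Function.support c) a :=
  ⟨ha, fun i hi => not_lt.1 fun hia => hi (hlt i hia)⟩

lemma isLeast_support_add [AddCommMonoid K] [PartialOrder K] [IsOrderedAddMonoid K]
    {c d : ι → K} {a b : ι} (hc : IsLeast (Function.support c) a)
    (hd : IsLeast (Function.support d) b) (hc0 : 0 ≤ c (min a b)) (hd0 : 0 ≤ d (min a b)) :
    IsLeast (Function.support (c + d)) (min a b) := by
  refine isLeast_support_of_ne_zero (fun hsum => ?_) fun i hi => ?_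
  · obtain ⟨hca, hdb⟩ := (add_eq_zero_iff_of_nonneg hc0 hd0).1 hsum
    rcases min_choice a b with hab | hab <;> rw [hab] at hca hdb
    exacts [hc.1 hca, hd.1 hdb]
  · rw [lt_min_iff] at hi
    simp [eq_zero_of_lt_of_isLeast_support hc hi.1, eq_zero_of_lt_of_isLeast_support hd hi.2]

end Leading

section Conforms

variable {ι K : Type*} {A F G s t : Set ι} {c d : ι → K} {e : ι}

lemma Conforms.add [AddZeroClass K] [Preorder K] [AddLeftMono K] (hc : Conforms s t A c)
    (hd : Conforms s t A d) : Conforms s t A (c + d) where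
  nonneg i hi hiA := add_nonneg (hc.nonneg i hi hiA) (hd.nonneg i hi hiA)
  nonpos i hi hiA := add_nonpos (hc.nonpos i hi hiA) (hd.nonpos i hi hiA)
  eq_zero i hi := by simp [hc.eq_zero i hi, hd.eq_zero i hi]

lemma Conforms.smul [MulZeroClass K] [Preorder K] [PosMulMono K] {r : K} (hr : 0 ≤ r)
    (hc : Conforms s t A c) : Conforms s t A (r • c) where
  nonneg i hi hiA := mul_nonneg hr (hc.nonneg i hi hiA)
  nonpos i hi hiA := mul_nonpos_of_nonneg_of_nonpos hr (hc.nonpos i hi hiA)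
  eq_zero i hi := by simp [hc.eq_zero i hi]

variable [LinearOrder ι]

lemma conforms_Iic_iff [Zero K] [LE K] : Conforms (Iic e) t A c ↔
    Conforms (Iio e) t A c ∧ (e ∉ A → 0 ≤ c e) ∧ (e ∈ A → c e ≤ 0) := by
  grind [Conforms, le_iff_lt_or_eq]

lemma conforms_Ici_diff_iff [Zero K] [LE K] : Conforms s (Ici e \ F) A c ↔
    Conforms s (Ioi e \ F) A c ∧ (e ∉ F → c e = 0) := by
  grind [Conforms, le_iff_lt_or_eq]

lemma conforms_of_isLeast_support [Zero K] [Preorder K] (hc : IsLeast (Function.support c) e)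
    (hcF : ∀ i ∈ Ioi e \ F, c i = 0) : Conforms (Iio e) (Ioi e \ F) A c :=
  ⟨fun _ hi _ => (eq_zero_of_lt_of_isLeast_support hc hi).ge,
    fun _ hi _ => (eq_zero_of_lt_of_isLeast_support hc hi).le, hcF⟩

open scoped Matrix in
lemma Conforms.mul_apply_nonpos [Fintype ι] [Ring K] [LinearOrder K] [IsOrderedRing K]
    (hc : Conforms (Iio e) (Ioi e \ F) A c) (hd : Conforms (Iio e) (Ioi e \ G) A d)
    (hFG : Disjoint F G) (hcd : c ⬝ᵥ d = 0) : c e * d e ≤ 0 := by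
  have hmul (i : ι) (hi : i ≠ e) : 0 ≤ c i * d i := by
    rcases hi.lt_or_gt with hlt | hgt
    · by_cases hiA : i ∈ A
      · exact mul_nonneg_of_nonpos_of_nonpos (hc.nonpos i hlt hiA) (hd.nonpos i hlt hiA)
      · exact mul_nonneg (hc.nonneg i hlt hiA) (hd.nonneg i hlt hiA)
    · by_cases hiF : i ∈ F
      · simp [hd.eq_zero i ⟨hgt, hFG.notMem_of_mem_left hiF⟩]
      · simp [hc.eq_zero i ⟨hgt, hiF⟩]
  by_contra! hpos
  refine (Finset.sum_pos' (fun i _ => ?_) ⟨e, Finset.mem_univ e, hpos⟩).ne' hcd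
  exact (eq_or_ne i e).elim (fun h => h ▸ hpos.le) (hmul i)

end Conforms

section Obstruction

variable {ι K : Type*} [LinearOrder ι] [Field K]

/-- `L` contains a vector whose first nonzero coordinate is `e` and whose other nonzero
coordinates lie in `F`. -/
def HasPivot (L : Submodule K (ι → K)) (e : ι) (F : Set ι) : Prop :=
  ∃ c ∈ L, IsLeast (Function.support c) e ∧ ∀ i ∈ Ioi e \ F, c i = 0

lemma hasPivot_congr {L : Submodule K (ι → K)} {e : ι} {F F' : Set ι}
    (hF : ∀ i ≠ e, i ∈ F ↔ i ∈ F') : HasPivot L e F ↔ HasPivot L e F' := by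
  simp only [HasPivot]
  grind

variable [LinearOrder K]

/-- `L` contains a nonzero vector that has the signs prescribed by `A` outside `U`, is supported
in `F` inside `U`, and whose first nonzero coordinate is in `U` or outside `A`. This is the
existence of an active element outside `A` for `U = ∅`, and of a nonzero vector of `L` supported
in `F` for `U = univ`. -/
def Obstructed (L : Submodule K (ι → K)) (U A F : Set ι) : Prop :=
  ∃ c ∈ L, Conforms Uᶜ (U \ F) A c ∧ ∃ a, IsLeast (Function.support c) a ∧ (a ∈ U ∨ a ∉ A)

/-- The common part of `Obstructed L (Ioi e) A F` and `Obstructed L (Ici e) A F`: the condition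
on the coordinate `e` is replaced by membership in `S`, and `e` is not allowed as the first
nonzero coordinate. -/
def ObstructedOff (L : Submodule K (ι → K)) (e : ι) (A F : Set ι) (S : Set K) : Prop :=
  ∃ c ∈ L, Conforms (Iio e) (Ioi e \ F) A c ∧ c e ∈ S ∧
    ∃ a, IsLeast (Function.support c) a ∧ (e < a ∨ a < e ∧ a ∉ A)

variable {L M : Submodule K (ι → K)} {A F : Set ι} {S T : Set K} {e : ι}

lemma obstructed_empty_iff : Obstructed L ∅ A F ↔
    ∃ a ∉ A, ∃ c ∈ L, Conforms univ ∅ A c ∧ IsLeast (Function.support c) a := by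
  simp only [Obstructed, compl_empty, empty_sdiff, mem_empty_iff_false, false_or]
  grind

lemma obstructed_univ_iff [Finite ι] : Obstructed L univ A F ↔
    ∃ c ∈ L, c ≠ 0 ∧ ∀ i ∉ F, c i = 0 := by
  constructor
  · rintro ⟨c, hcL, hc, a, ha, -⟩
    exact ⟨c, hcL, fun h => ha.1 (congrFun h a), fun i hi => hc.eq_zero i ⟨mem_univ i, hi⟩⟩
  · rintro ⟨c, hcL, hc0, hc⟩
    obtain ⟨a, ha, hmin⟩ := exists_min_image (Function.support c) id (toFinite _)
      (Function.support_nonempty_iff.2 hc0)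
    exact ⟨c, hcL, ⟨by simp, by simp, fun i hi => hc i hi.2⟩, a, ⟨ha, hmin⟩, Or.inl (mem_univ a)⟩

lemma ObstructedOff.mono (hST : S ⊆ T) (h : ObstructedOff L e A F S) :
    ObstructedOff L e A F T := by
  obtain ⟨c, hcL, hc, hcS, hlead⟩ := h
  exact ⟨c, hcL, hc, hST hcS, hlead⟩

lemma obstructedOff_union_iff :
    ObstructedOff L e A F (S ∪ T) ↔ ObstructedOff L e A F S ∨ ObstructedOff L e A F T := by
  simp only [ObstructedOff, mem_union, ← exists_or]
  grind

lemma obstructedOff_congr {A' F' : Set ι} (hA : ∀ i ≠ e, i ∈ A ↔ i ∈ A')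
    (hF : ∀ i ≠ e, i ∈ F ↔ i ∈ F') :
    ObstructedOff L e A F S ↔ ObstructedOff L e A' F' S := by
  have hconf (c : ι → K) :
      Conforms (Iio e) (Ioi e \ F) A c ↔ Conforms (Iio e) (Ioi e \ F') A' c := by
    grind [Conforms]
  simp only [ObstructedOff, hconf]
  grind

lemma obstructedOff_univ_iff :
    ObstructedOff L e A F univ ↔ ObstructedOff L e A F (Ici 0) ∨ ObstructedOff L e A F (Iic 0) := by
  rw [← obstructedOff_union_iff, union_comm, Iic_union_Ici]

lemma HasPivot.obstructedOff_zero (hL : HasPivot L e F) (h : ObstructedOff L e A F S) :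
    ObstructedOff L e A F {0} := by
  obtain ⟨p, hpL, hp, hpF⟩ := hL
  obtain ⟨c, hcL, hc, -, a, ha, haA⟩ := h
  by_cases hce : c e = 0
  · exact ⟨c, hcL, hc, hce, a, ha, haA⟩
  replace haA : a < e ∧ a ∉ A := haA.resolve_left (ha.2 hce).not_gt
  have hlt (i : ι) (hi : i < e) : (c - (c e / p e) • p) i = c i := by
    simp [eq_zero_of_lt_of_isLeast_support hp hi]
  refine ⟨c - (c e / p e) • p, L.sub_mem hcL (L.smul_mem _ hpL),
    ⟨fun i hi hiA => (hlt i hi).symm ▸ hc.nonneg i hi hiA,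
      fun i hi hiA => (hlt i hi).symm ▸ hc.nonpos i hi hiA,
      fun i hi => by simp [hc.eq_zero i hi, hpF i hi]⟩,
    by simp [div_mul_cancel₀ _ hp.1], a, isLeast_support_of_ne_zero ?_ fun i hi => ?_, Or.inr haA⟩
  · rw [hlt a haA.1]
    exact ha.1
  · rw [hlt i (hi.trans haA.1)]
    exact eq_zero_of_lt_of_isLeast_support ha hi

lemma obstructed_Ioi_iff_of_mem (he : e ∈ A) :
    Obstructed L (Ioi e) A F ↔ ObstructedOff L e A F (Iic 0) := by
  simp only [Obstructed, ObstructedOff, compl_Ioi, conforms_Iic_iff]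
  grind

lemma obstructed_Ici_iff_of_notMem (he : e ∉ F) :
    Obstructed L (Ici e) A F ↔ ObstructedOff L e A F {0} := by
  simp only [Obstructed, ObstructedOff, compl_Ici, conforms_Ici_diff_iff, mem_singleton_iff]
  constructor
  · rintro ⟨c, hcL, ⟨hc, hce⟩, a, ha, haA⟩
    have hae : a ≠ e := fun h => ha.1 (h ▸ hce he)
    exact ⟨c, hcL, hc, hce he, a, ha, by grind⟩
  · rintro ⟨c, hcL, hc, hce, a, ha, haA⟩
    exact ⟨c, hcL, ⟨hc, fun _ => hce⟩, a, ha, haA.imp le_of_lt And.right⟩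

lemma obstructed_Ici_iff_of_mem (he : e ∈ F) :
    Obstructed L (Ici e) A F ↔ ObstructedOff L e A F univ ∨ HasPivot L e F := by
  simp only [Obstructed, compl_Ici, conforms_Ici_diff_iff]
  constructor
  · rintro ⟨c, hcL, ⟨hc, -⟩, a, ha, haA⟩
    rcases eq_or_ne a e with rfl | hae
    · exact Or.inr ⟨c, hcL, ha, hc.eq_zero⟩
    · exact Or.inl ⟨c, hcL, hc, mem_univ _, a, ha, by grind⟩
  · rintro (⟨c, hcL, hc, -, a, ha, haA⟩ | ⟨p, hpL, hp, hpF⟩)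
    · exact ⟨c, hcL, ⟨hc, fun h => (h he).elim⟩, a, ha, haA.imp le_of_lt And.right⟩
    · exact ⟨p, hpL, ⟨conforms_of_isLeast_support hp hpF, fun h => (h he).elim⟩, e, hp,
        Or.inl le_rfl⟩

/-- The condition on `A` that interpolates between vanishing activities (`U = ∅`) and bases
(`U = univ`), for orthogonal spaces `L` of dependences and `M` of covectors. -/
def Unobstructed (L M : Submodule K (ι → K)) (U A : Set ι) : Prop :=
  ¬ Obstructed L U A A ∧ ¬ Obstructed M U A Aᶜ

lemma unobstructed_Ioi_insert_iff : Unobstructed L M (Ioi e) (insert e A) ↔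
    ¬ ObstructedOff L e A A (Iic 0) ∧ ¬ ObstructedOff M e A Aᶜ (Iic 0) := by
  have hA : ∀ i ≠ e, i ∈ insert e A ↔ i ∈ A := by simp +contextual
  have hAc : ∀ i ≠ e, i ∈ (insert e A)ᶜ ↔ i ∈ Aᶜ := by simp +contextual
  simp only [Unobstructed, obstructed_Ioi_iff_of_mem (mem_insert e A), obstructedOff_congr hA hA,
    obstructedOff_congr hA hAc]

lemma unobstructed_Ici_iff_of_notMem (he : e ∉ A) : Unobstructed L M (Ici e) A ↔
    ¬ ObstructedOff L e A A {0} ∧ ¬ ObstructedOff M e A Aᶜ univ ∧ ¬ HasPivot M e Aᶜ := by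
  simp only [Unobstructed, obstructed_Ici_iff_of_notMem he,
    obstructed_Ici_iff_of_mem (mem_compl he), not_or]

lemma unobstructed_Ici_insert_iff : Unobstructed L M (Ici e) (insert e A) ↔
    (¬ ObstructedOff L e A A univ ∧ ¬ HasPivot L e A) ∧ ¬ ObstructedOff M e A Aᶜ {0} := by
  have hA : ∀ i ≠ e, i ∈ insert e A ↔ i ∈ A := by simp +contextual
  have hAc : ∀ i ≠ e, i ∈ (insert e A)ᶜ ↔ i ∈ Aᶜ := by simp +contextual
  have he : e ∉ (insert e A)ᶜ := by simp
  simp only [Unobstructed, obstructed_Ici_iff_of_mem (mem_insert e A),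
    obstructed_Ici_iff_of_notMem he, obstructedOff_congr hA hA, obstructedOff_congr hA hAc,
    hasPivot_congr hA, not_or]

variable [IsStrictOrderedRing K]

lemma obstructedOff_singleton_zero_iff :
    ObstructedOff L e A F {0} ↔ ObstructedOff L e A F (Ici 0) ∧ ObstructedOff L e A F (Iic 0) := by
  refine ⟨fun h => ⟨h.mono (by simp), h.mono (by simp)⟩, ?_⟩
  rintro ⟨⟨c, hcL, hc, hce, a, ha, haA⟩, ⟨d, hdL, hd, hde, b, hb, hbA⟩⟩
  rw [mem_Ici] at hce
  rw [mem_Iic] at hde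
  rcases hce.eq_or_lt' with hce | hce
  · exact ⟨c, hcL, hc, hce, a, ha, haA⟩
  rcases hde.eq_or_lt with hde | hde
  · exact ⟨d, hdL, hd, hde, b, hb, hbA⟩
  replace haA : a < e ∧ a ∉ A := haA.resolve_left (ha.2 hce.ne').not_gt
  replace hbA : b < e ∧ b ∉ A := hbA.resolve_left (hb.2 hde.ne).not_gt
  have hmin : min a b < e ∧ min a b ∉ A := by grind
  have hc' := hc.smul (neg_nonneg.2 hde.le)
  have hd' := hd.smul hce.le
  refine ⟨-d e • c + c e • d, L.add_mem (L.smul_mem _ hcL) (L.smul_mem _ hdL), hc'.add hd', ?_,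
    min a b, isLeast_support_add ?_ ?_ (hc'.nonneg _ hmin.1 hmin.2) (hd'.nonneg _ hmin.1 hmin.2),
    Or.inr hmin⟩
  · simp [mul_comm]
  · rwa [Function.support_const_smul_of_ne_zero _ _ (neg_ne_zero.2 hde.ne)]
  · rwa [Function.support_const_smul_of_ne_zero _ _ hce.ne']

lemma HasPivot.exists_pos (h : HasPivot L e F) :
    ∃ p ∈ L, IsLeast (Function.support p) e ∧ (∀ i ∈ Ioi e \ F, p i = 0) ∧ 0 < p e := by
  obtain ⟨p, hpL, hp, hpF⟩ := h
  have hpe : p e ≠ 0 := hp.1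
  refine ⟨p e • p, L.smul_mem _ hpL, ?_, fun i hi => by simp [hpF i hi],
    by simpa using mul_self_pos.2 hpe⟩
  rwa [Function.support_const_smul_of_ne_zero _ _ hpe]

lemma obstructed_Ioi_iff_of_notMem (he : e ∉ A) :
    Obstructed L (Ioi e) A F ↔ ObstructedOff L e A F (Ici 0) ∨ HasPivot L e F := by
  simp only [Obstructed, compl_Ioi, conforms_Iic_iff]
  constructor
  · rintro ⟨c, hcL, ⟨hc, hce, -⟩, a, ha, haA⟩
    rcases eq_or_ne a e with rfl | hae
    · exact Or.inr ⟨c, hcL, ha, hc.eq_zero⟩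
    · exact Or.inl ⟨c, hcL, hc, hce he, a, ha, by grind⟩
  · rintro (⟨c, hcL, hc, hce, a, ha, haA⟩ | hL)
    · exact ⟨c, hcL, ⟨hc, fun _ => hce, fun h => (he h).elim⟩, a, ha, haA.imp_right And.right⟩
    · obtain ⟨p, hpL, hp, hpF, hpe⟩ := hL.exists_pos
      exact ⟨p, hpL, ⟨conforms_of_isLeast_support hp hpF, fun _ => hpe.le, fun h => (he h).elim⟩,
        e, hp, Or.inr he⟩

lemma unobstructed_Ioi_iff_of_notMem (he : e ∉ A) : Unobstructed L M (Ioi e) A ↔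
    (¬ ObstructedOff L e A A (Ici 0) ∧ ¬ HasPivot L e A) ∧
      ¬ ObstructedOff M e A Aᶜ (Ici 0) ∧ ¬ HasPivot M e Aᶜ := by
  simp only [Unobstructed, obstructed_Ioi_iff_of_notMem he, not_or]

end Obstruction

lemma card_filter_eq_of_exchange {ι : Type*} [Fintype ι] [DecidableEq ι]
    {p q : Finset ι → Prop} [DecidablePred p] [DecidablePred q] (e : ι)
    (hand : ∀ A, e ∉ A → (p A ∧ p (insert e A) ↔ q A ∧ q (insert e A)))
    (hor : ∀ A, e ∉ A → (p A ∨ p (insert e A) ↔ q A ∨ q (insert e A))) :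
    (Finset.univ.filter p).card = (Finset.univ.filter q).card := by
  have huniv : (Finset.univ : Finset (Finset ι)) =
      (insert e (Finset.univ.erase e)).powerset := by
    rw [Finset.insert_erase (Finset.mem_univ e), Finset.powerset_univ]
  simp only [Finset.card_filter, huniv,
    Finset.sum_powerset_insert (Finset.notMem_erase e Finset.univ), ← Finset.sum_add_distrib]
  refine Finset.sum_congr rfl fun A hA => ?_
  have heA : e ∉ A := fun h => Finset.notMem_erase e _ (Finset.mem_powerset.1 hA h)
  have hand_A := hand A heA
  have hor_A := hor A heA
  grind

section Orthogonal

open scoped Matrix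

variable {ι K : Type*} [Fintype ι] [LinearOrder ι] [Field K] [LinearOrder K]
  [IsStrictOrderedRing K] {L M : Submodule K (ι → K)} {A F G : Set ι} {S T : Set K} {e : ι}

lemma HasPivot.apply_eq_zero {d : ι → K} (hL : HasPivot L e F) (horth : ∀ c ∈ L, c ⬝ᵥ d = 0)
    (hFG : Disjoint F G) (hd : Conforms (Iio e) (Ioi e \ G) A d) : d e = 0 := by
  obtain ⟨p, hpL, hp, hpF⟩ := hL
  have hle : p e * d e ≤ 0 :=
    (conforms_of_isLeast_support hp hpF).mul_apply_nonpos hd hFG (horth p hpL)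
  have hge : -p e * d e ≤ 0 :=
    (conforms_of_isLeast_support (c := -p) (by rwa [Function.support_neg])
      fun i hi => by simp [hpF i hi]).mul_apply_nonpos hd hFG (horth _ (L.neg_mem hpL))
  exact (mul_eq_zero.1 (hle.antisymm (by linarith))).resolve_left hp.1

lemma HasPivot.not_hasPivot (hL : HasPivot L e F) (horth : ∀ c ∈ L, ∀ d ∈ M, c ⬝ᵥ d = 0)
    (hFG : Disjoint F G) : ¬ HasPivot M e G := by
  rintro ⟨d, hdM, hd, hdG⟩
  exact hd.1 (hL.apply_eq_zero (horth · · d hdM) hFG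
    (conforms_of_isLeast_support (A := ∅) hd hdG))

lemma HasPivot.obstructedOff_zero_of_orthogonal (hL : HasPivot L e F)
    (horth : ∀ c ∈ L, ∀ d ∈ M, c ⬝ᵥ d = 0) (hFG : Disjoint F G) (h : ObstructedOff M e A G S) :
    ObstructedOff M e A G {0} := by
  obtain ⟨d, hdM, hd, -, hlead⟩ := h
  exact ⟨d, hdM, hd, hL.apply_eq_zero (horth · · d hdM) hFG hd, hlead⟩

lemma obstructedOff_iff_of_hasPivot (horth : ∀ c ∈ L, ∀ d ∈ M, c ⬝ᵥ d = 0) (hFG : Disjoint F G)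
    (h : HasPivot L e F ∨ HasPivot M e G) (hS : 0 ∈ S) (hT : 0 ∈ T) :
    ObstructedOff M e A G S ↔ ObstructedOff M e A G T := by
  have to_zero {R : Set K} (hR : ObstructedOff M e A G R) : ObstructedOff M e A G {0} :=
    h.elim (·.obstructedOff_zero_of_orthogonal horth hFG hR) (·.obstructedOff_zero hR)
  exact ⟨fun h => (to_zero h).mono (singleton_subset_iff.2 hT),
    fun h => (to_zero h).mono (singleton_subset_iff.2 hS)⟩

lemma ObstructedOff.zero_or_zero (horth : ∀ c ∈ L, ∀ d ∈ M, c ⬝ᵥ d = 0) (hFG : Disjoint F G)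
    (hST : ∀ x ∈ S, ∀ y ∈ T, 0 ≤ x * y) (hL : ObstructedOff L e A F S)
    (hM : ObstructedOff M e A G T) : ObstructedOff L e A F {0} ∨ ObstructedOff M e A G {0} := by
  obtain ⟨c, hcL, hc, hce, hclead⟩ := hL
  obtain ⟨d, hdM, hd, hde, hdlead⟩ := hM
  have hmul : c e * d e = 0 :=
    (hc.mul_apply_nonpos hd hFG (horth c hcL d hdM)).antisymm (hST _ hce _ hde)
  exact (mul_eq_zero.1 hmul).imp (fun h => ⟨c, hcL, hc, h, hclead⟩)
    fun h => ⟨d, hdM, hd, h, hdlead⟩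

lemma unobstructed_exchange (horth : ∀ c ∈ L, ∀ d ∈ M, c ⬝ᵥ d = 0) (he : e ∉ A) :
    (Unobstructed L M (Ioi e) A ∧ Unobstructed L M (Ioi e) (insert e A) ↔
      Unobstructed L M (Ici e) A ∧ Unobstructed L M (Ici e) (insert e A)) ∧
    (Unobstructed L M (Ioi e) A ∨ Unobstructed L M (Ioi e) (insert e A) ↔
      Unobstructed L M (Ici e) A ∨ Unobstructed L M (Ici e) (insert e A)) := by
  have horth' : ∀ d ∈ M, ∀ c ∈ L, d ⬝ᵥ c = 0 :=
    fun d hd c hc => (dotProduct_comm d c).trans (horth c hc d hd)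
  have hdisj : Disjoint A Aᶜ := disjoint_compl_right
  have pivot_excl : HasPivot L e A → ¬ HasPivot M e Aᶜ := fun h => h.not_hasPivot horth hdisj
  have pivot_L (h : HasPivot L e A ∨ HasPivot M e Aᶜ) :
      ObstructedOff L e A A (Ici 0) ↔ ObstructedOff L e A A (Iic 0) :=
    obstructedOff_iff_of_hasPivot horth' hdisj.symm h.symm self_mem_Ici self_mem_Iic
  have pivot_M (h : HasPivot L e A ∨ HasPivot M e Aᶜ) :
      ObstructedOff M e A Aᶜ (Ici 0) ↔ ObstructedOff M e A Aᶜ (Iic 0) :=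
    obstructedOff_iff_of_hasPivot horth hdisj h self_mem_Ici self_mem_Iic
  have nonneg_excl : ObstructedOff L e A A (Ici 0) → ObstructedOff M e A Aᶜ (Ici 0) →
      ObstructedOff L e A A {0} ∨ ObstructedOff M e A Aᶜ {0} :=
    ObstructedOff.zero_or_zero horth hdisj fun x hx y hy => mul_nonneg hx hy
  have nonpos_excl : ObstructedOff L e A A (Iic 0) → ObstructedOff M e A Aᶜ (Iic 0) →
      ObstructedOff L e A A {0} ∨ ObstructedOff M e A Aᶜ {0} :=
    ObstructedOff.zero_or_zero horth hdisj fun x hx y hy => mul_nonneg_of_nonpos_of_nonpos hx hy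
  rw [unobstructed_Ioi_iff_of_notMem he, unobstructed_Ioi_insert_iff,
    unobstructed_Ici_iff_of_notMem he, unobstructed_Ici_insert_iff]
  simp only [obstructedOff_singleton_zero_iff, obstructedOff_univ_iff]
    at nonneg_excl nonpos_excl ⊢
  -- With a pivot the sign required at `e` is immaterial; without one, both claims follow
  -- propositionally from the two exclusions.
  by_cases hpivot : HasPivot L e A ∨ HasPivot M e Aᶜ
  · rw [pivot_L hpivot, pivot_M hpivot]
    grind
  · grind

theorem ncard_unobstructed_empty_eq_univ (horth : ∀ c ∈ L, ∀ d ∈ M, c ⬝ᵥ d = 0) :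
    {A : Finset ι | Unobstructed L M ∅ A}.ncard =
      {A : Finset ι | Unobstructed L M univ A}.ncard := by
  classical
  suffices h : ∀ U : Finset ι, IsUpperSet (U : Set ι) →
      {A : Finset ι | Unobstructed L M ∅ A}.ncard =
        {A : Finset ι | Unobstructed L M U A}.ncard by
    simpa using h Finset.univ (by simpa using isUpperSet_univ)
  intro U
  induction U using Finset.induction_on_min with
  | empty => simp
  | insert e U hmin ih =>
    intro hupper
    have hIoi : (U : Set ι) = Ioi e := by
      ext i
      refine ⟨hmin i, fun hi => ?_⟩
      simpa [(mem_Ioi.1 hi).ne'] using hupper (mem_Ioi.1 hi).le (by simp)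
    rw [ih (hIoi ▸ isUpperSet_Ioi e), Finset.coe_insert, hIoi, Ioi_insert]
    simp only [ncard_eq_toFinset_card', toFinset_ofPred]
    have hex (A : Finset ι) (he : e ∉ A) := unobstructed_exchange (A := A) horth (by simpa using he)
    refine card_filter_eq_of_exchange e (fun A he => ?_) fun A he => ?_
    · simpa using (hex A he).1
    · simpa using (hex A he).2

end Orthogonal

section Configuration

variable {ι K V : Type*} [Field K] [AddCommGroup V] [Module K V]

/-- The space of linear dependences of the configuration `v`. -/
def dependences [Fintype ι] (v : ι → V) : Submodule K (ι → K) :=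
  LinearMap.ker (Fintype.linearCombination K v)

/-- The space of covectors of the configuration `v`: the families of values on `v` of the linear
functionals on `V`. -/
def covectors (v : ι → V) : Submodule K (ι → K) :=
  LinearMap.range (LinearMap.pi fun i => Module.Dual.eval K V (v i))

lemma mem_dependences [Fintype ι] {v : ι → V} {c : ι → K} :
    c ∈ dependences v ↔ ∑ i, c i • v i = 0 := by
  simp [dependences, Fintype.linearCombination_apply]

lemma mem_covectors {v : ι → V} {d : ι → K} :
    d ∈ covectors v ↔ ∃ f : V →ₗ[K] K, (fun i => f (v i)) = d :=
  Iff.rfl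

open scoped Matrix in
lemma dotProduct_eq_zero_of_mem_dependences [Fintype ι] {v : ι → V} {c d : ι → K}
    (hc : c ∈ dependences v) (hd : d ∈ covectors v) : c ⬝ᵥ d = 0 := by
  obtain ⟨f, rfl⟩ := mem_covectors.1 hd
  simpa [dotProduct] using congrArg f (mem_dependences.1 hc)

variable [LinearOrder ι] [LinearOrder K] {v : ι → V}

lemma not_obstructed_dependences_univ_iff [Fintype ι] {A B : Set ι} :
    ¬ Obstructed (dependences (K := K) v) univ A B ↔ LinearIndepOn K v B := by
  simp only [obstructed_univ_iff, linearIndepOn_iff, Finsupp.mem_supported',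
    (Finsupp.linearEquivFunOnFinite K K ι).symm.surjective.forall, dependences, LinearMap.mem_ker,
    Finsupp.linearEquivFunOnFinite_symm_apply,
    Finsupp.linearCombination_eq_fintype_linearCombination_apply, LinearEquiv.map_eq_zero_iff]
  simp only [not_exists, not_and]
  exact forall_congr' fun c =>
    ⟨fun h hB hc => not_not.1 fun h0 => h hc h0 hB, fun h hc h0 hB => h0 (h hB hc)⟩

lemma not_obstructed_covectors_univ_iff [Finite ι] {A B : Set ι} :
    ¬ Obstructed (covectors (K := K) v) univ A Bᶜ ↔ span K (v '' B) = span K (v '' univ) := by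
  simp only [obstructed_univ_iff, notMem_compl_iff]
  constructor
  · intro h
    refine (span_mono (image_mono (subset_univ B))).antisymm (span_le.2 ?_)
    rintro _ ⟨i, -, rfl⟩
    by_contra hi
    obtain ⟨f, hfi, hf⟩ := exists_le_ker_of_notMem hi
    exact h ⟨_, mem_covectors.2 ⟨f, rfl⟩, fun h0 => hfi (congrFun h0 i),
      fun j hj => hf (subset_span (mem_image_of_mem v hj))⟩
  · rintro hspan ⟨d, hd, hd0, hdB⟩
    obtain ⟨f, rfl⟩ := mem_covectors.1 hd
    have hker : span K (v '' univ) ≤ LinearMap.ker f := by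
      rw [← hspan, span_le]
      rintro _ ⟨i, hi, rfl⟩
      exact hdB i hi
    exact hd0 (funext fun i => hker (subset_span (mem_image_of_mem v (mem_univ i))))

end Configuration

section Activity

variable {n : ℕ} {V : Type*} [AddCommGroup V] (v : Fin n → V) (A : Finset (Fin n))

lemma reorient_involutive : Function.Involutive fun w : Fin n → V => reorient w A := by
  intro w
  ext i
  by_cases hi : i ∈ A <;> simp [reorient, hi]

variable [Module ℝ V]

lemma sum_reorient_smul_reorient (c : Fin n → ℝ) :
    ∑ i, reorient c A i • reorient v A i = ∑ i, c i • v i := by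
  refine Finset.sum_congr rfl fun i _ => ?_
  by_cases hi : i ∈ A <;> simp [reorient, hi]

lemma map_reorient_apply {W : Type*} [AddCommGroup W] [Module ℝ W] (f : V →ₗ[ℝ] W) (i : Fin n) :
    f (reorient v A i) = reorient (fun i => f (v i)) A i := by
  by_cases hi : i ∈ A <;> simp [reorient, hi]

lemma reorient_nonneg_pos_iff (c : Fin n → ℝ) (a : Fin n) :
    ((∀ i, 0 ≤ reorient c A i) ∧ 0 < reorient c A a ∧ ∀ i < a, reorient c A i = 0) ↔
      Conforms univ ∅ A c ∧ IsLeast (Function.support c) a := by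
  have hzero (i : Fin n) : reorient c A i = 0 ↔ c i = 0 := by
    by_cases hi : i ∈ A <;> simp [reorient, hi]
  have hconf : (∀ i, 0 ≤ reorient c A i) ↔ Conforms univ ∅ A c := by
    simp only [reorient]
    grind [Conforms]
  rw [← hconf]
  refine and_congr_right fun hnonneg => ?_
  simp only [(hnonneg a).lt_iff_ne', ne_eq, hzero]
  exact ⟨fun h => isLeast_support_of_ne_zero h.1 h.2,
    fun h => ⟨h.1, fun _ => eq_zero_of_lt_of_isLeast_support h⟩⟩

lemma oActive_reorient_iff (a : Fin n) : OActive (reorient v A) a ↔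
    ∃ c ∈ dependences (K := ℝ) v, Conforms univ ∅ A c ∧ IsLeast (Function.support c) a := by
  rw [OActive, (reorient_involutive (V := ℝ) A).surjective.exists]
  simp only [sum_reorient_smul_reorient, ← reorient_nonneg_pos_iff, mem_dependences]
  exact exists_congr fun c => and_left_comm

lemma oDualActive_reorient_iff (a : Fin n) : ODualActive (reorient v A) a ↔
    ∃ d ∈ covectors (K := ℝ) v, Conforms univ ∅ A d ∧ IsLeast (Function.support d) a := by
  simp only [ODualActive, map_reorient_apply, reorient_nonneg_pos_iff, mem_covectors]
  simp

lemma theta_eq_zero_iff (F : Set (Fin n)) :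
    theta v A = 0 ↔ ¬ Obstructed (dependences (K := ℝ) v) ∅ A F := by
  rw [theta, ncard_eq_zero, obstructed_empty_iff]
  simp [eq_empty_iff_forall_notMem, oActive_reorient_iff]

lemma thetaStar_eq_zero_iff (F : Set (Fin n)) :
    thetaStar v A = 0 ↔ ¬ Obstructed (covectors (K := ℝ) v) ∅ A F := by
  rw [thetaStar, ncard_eq_zero, obstructed_empty_iff]
  simp [eq_empty_iff_forall_notMem, oDualActive_reorient_iff]

end Activity

theorem statement12_general {n : ℕ} {V : Type*} [AddCommGroup V] [Module ℝ V] (v : Fin n → V) :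
    {A : Finset (Fin n) | thetaStar v A = 0 ∧ theta v A = 0}.ncard =
      {B : Finset (Fin n) | LinearIndependent ℝ (fun i : ↥B => v ↑i) ∧
        span ℝ (v '' ↑B) = span ℝ (v '' Set.univ)}.ncard := by
  have hempty (A : Finset (Fin n)) : (thetaStar v A = 0 ∧ theta v A = 0) ↔
      Unobstructed (dependences (K := ℝ) v) (covectors v) ∅ A := by
    rw [theta_eq_zero_iff v A A, thetaStar_eq_zero_iff v A Aᶜ, and_comm, Unobstructed]
  have huniv (B : Finset (Fin n)) :
      (LinearIndependent ℝ (fun i : ↥B => v ↑i) ∧ span ℝ (v '' ↑B) = span ℝ (v '' Set.univ)) ↔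
        Unobstructed (dependences (K := ℝ) v) (covectors v) univ B :=
    (not_obstructed_dependences_univ_iff.and not_obstructed_covectors_univ_iff).symm
  simp only [hempty, huniv]
  exact ncard_unobstructed_empty_eq_univ
    fun _ hc _ hd => dotProduct_eq_zero_of_mem_dependences hc hd

/-- the number of subsets `A` with `θ*(A) = θ(A) = 0` equals the number of bases
of the underlying matroid. -/
theorem statement12 {n : ℕ} {V : Type*} [AddCommGroup V] [Module ℝ V] [FiniteDimensional ℝ V]
    (v : Fin n → V) :
    {A : Finset (Fin n) | thetaStar v A = 0 ∧ theta v A = 0}.ncard =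
      {B : Finset (Fin n) | LinearIndependent ℝ (fun i : ↥B => v ↑i) ∧
        span ℝ (v '' ↑B) = span ℝ (v '' Set.univ)}.ncard :=
  statement12_general v
end
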